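/- arXiv:1001.2751 — 3 statements merged into one kernel-verified Lean document; each statement's English description precedes it below -/
import Mathlib

section
/- Let κ > 0, s ∈ (0, 1/2), ϑ ∈ (s/2 + 1/4, 1/2), K ∈ ℕ and x, y ∈ (0,1). Then ∑_{i=1}^{K} (κ π² i²)^{-2ϑ} · (√2 sin(iπx) - √2 sin(iπy))² ≤ 3 (1 + κ^{-1}) · (∑_{i=1}^{∞} i^{2s - 4ϑ}) · |x - y|^{2s}, where the series on the right-hand side converges (since 2s - 4ϑ < -1). -/
open Real

open scoped NNReal

/-!
Interpolating between `|sin a - sin b| ≤ 2` and `|sin a - sin b| ≤ |a - b|` makes the sine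
`s`-Hölder with constant `2` for every `s ∈ [0, 1]`. The `i`-th eigenfunction therefore has squared
increments at most `8 (iπ|x - y|)^{2s}`, and weighting by `λ_i^{-2ϑ} = κ^{-2ϑ} (iπ)^{-4ϑ}` gives
`8 κ^{-2ϑ} (iπ)^{2s - 4ϑ} |x - y|^{2s}`. This is summable in `i` because `2s - 4ϑ < -1`. The
constant `3 (1 + κ⁻¹)` comes from `8 π^{2s - 4ϑ} ≤ 8 / π < 3` and, for `2ϑ ≤ 1`, from
`κ^{-2ϑ} ≤ 1 + κ⁻¹`.
-/

theorem holderWith_sin {s : ℝ≥0} (hs : s ≤ 1) : HolderWith 2 s sin := by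
  have hbounded : HolderWith 2 0 sin := fun a b => by
    have hdist : dist (sin a) (sin b) ≤ 2 :=
      (Real.dist_le_of_mem_Icc (sin_mem_Icc a) (sin_mem_Icc b)).trans_eq (by norm_num)
    simpa [edist_dist] using hdist
  simpa using hbounded.of_le_of_le lipschitzWith_sin.holderWith zero_le hs

theorem sq_sin_sub_sin_le {s : ℝ} (hs0 : 0 ≤ s) (hs1 : s ≤ 1) (a b : ℝ) :
    (sin a - sin b) ^ 2 ≤ 4 * |a - b| ^ (2 * s) := by
  lift s to ℝ≥0 using hs0
  have hholder : |sin a - sin b| ≤ 2 * |a - b| ^ (s : ℝ) := (holderWith_sin hs1).dist_le a b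
  calc (sin a - sin b) ^ 2 = |sin a - sin b| ^ 2 := (sq_abs _).symm
    _ ≤ (2 * |a - b| ^ (s : ℝ)) ^ 2 := by gcongr
    _ = 4 * |a - b| ^ (2 * (s : ℝ)) := by
      rw [mul_pow, mul_comm 2 (s : ℝ), rpow_mul (abs_nonneg _), rpow_two]
      norm_num

theorem rpow_le_one_add {a t : ℝ} (ha : 0 ≤ a) (ht0 : 0 ≤ t) (ht1 : t ≤ 1) : a ^ t ≤ 1 + a := by
  have hbernoulli := rpow_one_add_le_one_add_mul_self (s := a - 1) (by linarith) ht0 ht1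
  rw [add_sub_cancel] at hbernoulli
  linarith [mul_le_of_le_one_right ha ht1]

/-- The `i`-th eigenvalue `λ_i` of `-κ Δ` on `(0, 1)` with Dirichlet boundary conditions, indexed
from `i = 1`. -/
noncomputable def dirichletEigenvalue (κ : ℝ) (i : ℕ) : ℝ :=
  κ * π ^ 2 * (i : ℝ) ^ 2

/-- The `i`-th `L²`-normalised Dirichlet eigenfunction `e_i` of the Laplacian on `(0, 1)`, indexed
from `i = 1` and extended to all of `ℝ` by the same formula. -/
noncomputable def dirichletEigenfunction (i : ℕ) (x : ℝ) : ℝ :=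
  √2 * sin ((i : ℝ) * π * x)

theorem dirichletEigenvalue_rpow {κ : ℝ} (hκ : 0 ≤ κ) (i : ℕ) (p : ℝ) :
    dirichletEigenvalue κ i ^ p = κ ^ p * (i * π) ^ (2 * p) := by
  have hsq : dirichletEigenvalue κ i = κ * (i * π) ^ 2 := by
    rw [dirichletEigenvalue]
    ring
  rw [hsq, mul_rpow hκ (by positivity), rpow_mul (by positivity), rpow_two]

theorem sq_dirichletEigenfunction_sub_le {s : ℝ} (hs0 : 0 ≤ s) (hs1 : s ≤ 1) (i : ℕ) (x y : ℝ) :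
    (dirichletEigenfunction i x - dirichletEigenfunction i y) ^ 2 ≤
      8 * (i * π) ^ (2 * s) * |x - y| ^ (2 * s) := by
  calc (dirichletEigenfunction i x - dirichletEigenfunction i y) ^ 2
      = 2 * (sin (i * π * x) - sin (i * π * y)) ^ 2 := by
        rw [dirichletEigenfunction, dirichletEigenfunction, ← mul_sub, mul_pow, sq_sqrt zero_le_two]
    _ ≤ 2 * (4 * |i * π * x - i * π * y| ^ (2 * s)) := by
        gcongr
        exact sq_sin_sub_sin_le hs0 hs1 _ _
    _ = 8 * (i * π) ^ (2 * s) * |x - y| ^ (2 * s) := by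
        have hfreq : (0 : ℝ) ≤ i * π := by positivity
        rw [← mul_sub, abs_mul, abs_of_nonneg hfreq, mul_rpow hfreq (abs_nonneg _)]
        ring

theorem dirichletEigenvalue_rpow_mul_sq_sub_le {κ s : ℝ} (hκ : 0 ≤ κ) (hs0 : 0 ≤ s) (hs1 : s ≤ 1)
    (ϑ : ℝ) {i : ℕ} (hi : i ≠ 0) (x y : ℝ) :
    dirichletEigenvalue κ i ^ (-(2 * ϑ)) *
        (dirichletEigenfunction i x - dirichletEigenfunction i y) ^ 2 ≤
      8 * κ ^ (-(2 * ϑ)) * π ^ (2 * s - 4 * ϑ) * (i : ℝ) ^ (2 * s - 4 * ϑ) * |x - y| ^ (2 * s) := by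
  have hfreq : (0 : ℝ) < i * π := by positivity
  calc dirichletEigenvalue κ i ^ (-(2 * ϑ)) *
        (dirichletEigenfunction i x - dirichletEigenfunction i y) ^ 2
      ≤ κ ^ (-(2 * ϑ)) * (i * π) ^ (2 * -(2 * ϑ)) *
          (8 * (i * π) ^ (2 * s) * |x - y| ^ (2 * s)) := by
        rw [dirichletEigenvalue_rpow hκ]
        gcongr
        exact sq_dirichletEigenfunction_sub_le hs0 hs1 i x y
    _ = 8 * κ ^ (-(2 * ϑ)) * (i * π) ^ (2 * s - 4 * ϑ) * |x - y| ^ (2 * s) := by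
        have hexp : 2 * s - 4 * ϑ = 2 * -(2 * ϑ) + 2 * s := by ring
        rw [hexp, rpow_add hfreq]
        ring
    _ = _ := by
        rw [mul_rpow i.cast_nonneg pi_nonneg]
        ring

theorem eight_mul_rpow_neg_mul_pi_rpow_le {κ t p : ℝ} (hκ : 0 ≤ κ) (ht0 : 0 ≤ t) (ht1 : t ≤ 1)
    (hp : p ≤ -1) : 8 * κ ^ (-t) * π ^ p ≤ 3 * (1 + κ⁻¹) := by
  have hpi : 8 * π ^ p ≤ 3 := by
    calc 8 * π ^ p ≤ 8 * π ^ (-1 : ℝ) := by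
          gcongr
          linarith [pi_gt_three]
      _ ≤ 8 * 3⁻¹ := by
          rw [rpow_neg_one]
          gcongr
          exact pi_gt_three.le
      _ ≤ 3 := by norm_num
  have hkappa : κ ^ (-t) ≤ 1 + κ⁻¹ := by
    rw [rpow_neg hκ, ← inv_rpow hκ]
    exact rpow_le_one_add (inv_nonneg.mpr hκ) ht0 ht1
  calc 8 * κ ^ (-t) * π ^ p = 8 * π ^ p * κ ^ (-t) := by ring
    _ ≤ 3 * (1 + κ⁻¹) := by gcongr

theorem stmt_10_general {κ s ϑ : ℝ} (hκ : 0 < κ) (hs0 : 0 ≤ s) (hs1 : s ≤ 1)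
    (hϑ : s / 2 + 1 / 4 < ϑ) (K : ℕ) (x y : ℝ) :
    Summable (fun i : ℕ+ => (i : ℝ) ^ (2 * s - 4 * ϑ)) ∧
      ∑ i ∈ Finset.Icc 1 K, dirichletEigenvalue κ i ^ (-(2 * ϑ)) *
          (dirichletEigenfunction i x - dirichletEigenfunction i y) ^ 2 ≤
        8 * κ ^ (-(2 * ϑ)) * π ^ (2 * s - 4 * ϑ) * (∑' i : ℕ+, (i : ℝ) ^ (2 * s - 4 * ϑ)) *
          |x - y| ^ (2 * s) := by
  have hsum : Summable (fun i : ℕ => (i : ℝ) ^ (2 * s - 4 * ϑ)) :=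
    summable_nat_rpow.mpr (by linarith)
  refine ⟨summable_pnat_iff_summable_nat.mpr hsum, ?_⟩
  have hzero : ((0 : ℕ) : ℝ) ^ (2 * s - 4 * ϑ) = 0 := by
    rw [Nat.cast_zero, zero_rpow (by linarith)]
  rw [tsum_pnat_eq_tsum_of_eq_zero (f := fun i : ℕ => (i : ℝ) ^ (2 * s - 4 * ϑ)) hzero]
  calc _ ≤ ∑ i ∈ Finset.Icc 1 K, 8 * κ ^ (-(2 * ϑ)) * π ^ (2 * s - 4 * ϑ) *
        (i : ℝ) ^ (2 * s - 4 * ϑ) * |x - y| ^ (2 * s) :=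
        Finset.sum_le_sum fun i hi => dirichletEigenvalue_rpow_mul_sq_sub_le hκ.le hs0 hs1 ϑ
          (Nat.one_le_iff_ne_zero.mp (Finset.mem_Icc.mp hi).1) x y
    _ ≤ _ := by
        rw [← Finset.sum_mul, ← Finset.mul_sum]
        gcongr
        exact hsum.sum_le_tsum _ fun i _ => by positivity

/-- For `κ > 0`, `s ∈ (0, 1/2)`, `ϑ ∈ (s/2 + 1/4, 1/2)`, `K ∈ ℕ` and `x, y ∈ (0,1)`:
`∑_{i=1}^K (κ π² i²)^{-2ϑ} (√2 sin(iπx) - √2 sin(iπy))²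
  ≤ 3 (1 + κ⁻¹) (∑_{i=1}^∞ i^{2s - 4ϑ}) |x - y|^{2s}`,
where the series on the right-hand side converges. -/
theorem stmt_10 (κ s ϑ : ℝ) (hκ : 0 < κ) (hs0 : 0 < s) (hs1 : s < 1 / 2)
    (hϑ1 : s / 2 + 1 / 4 < ϑ) (hϑ2 : ϑ < 1 / 2) (K : ℕ) (x y : ℝ)
    (hx : x ∈ Set.Ioo (0 : ℝ) 1) (hy : y ∈ Set.Ioo (0 : ℝ) 1) :
    Summable (fun i : ℕ+ => (i : ℝ) ^ (2 * s - 4 * ϑ)) ∧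
      ∑ i ∈ Finset.Icc 1 K, (κ * π ^ 2 * (i : ℝ) ^ 2) ^ (-(2 * ϑ))
          * (Real.sqrt 2 * Real.sin ((i : ℝ) * π * x)
              - Real.sqrt 2 * Real.sin ((i : ℝ) * π * y)) ^ 2
        ≤ 3 * (1 + κ⁻¹) * (∑' i : ℕ+, (i : ℝ) ^ (2 * s - 4 * ϑ)) * |x - y| ^ (2 * s) :=
  (stmt_10_general hκ hs0.le (by linarith) hϑ1 K x y).imp_right fun hle => hle.trans (by
    gcongr ?_ * _ * _
    exact eight_mul_rpow_neg_mul_pi_rpow_le hκ.le (by linarith) (by linarith) (by linarith))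
end

section
/- Let T > 0, M ∈ ℕ with M ≥ 1, h = T/M, m ∈ {1, …, M} and δ ∈ (0, 1/2). Then ∑_{l=0}^{m-1} ∫_{lh}^{(l+1)h} ( sup_{λ>0} λ^{-δ} ( e^{-λ(mh - s)} - e^{-λ(m-l)h} ) )² ds ≤ (2 + 1/(1 - 2δ)) · h^{1 + 2δ}. -/
/-!
The difference `e^{-λa} - e^{-λb} = e^{-λa}(1 - e^{-λ(b-a)})` is estimated in two ways. Bounding
`1 - e^{-y}` by `y ^ δ` gives `λ^{-δ}(e^{-λa} - e^{-λb}) ≤ (b - a)^δ`; bounding it by `y` and using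
`x^{1-δ} e^{-x} ≤ 1` with `x = λa` gives the bound `a^{δ-1}(b - a)`, which decays in `a`. In terms
of the time `a = mh - s` left until `mh`, the sum runs over the steps `[kh, (k+1)h]`. The first
estimate handles the step `k = 0`, where the second is singular, and contributes `h^{1+2δ}`; the
second contributes `k^{2δ-2} h^{1+2δ}` for `k ≥ 1`, and `∑ k^{2δ-2} ≤ 1 + 1/(1-2δ)` by comparison
with an integral.
-/

open Real Set

section Exponential

lemma one_sub_exp_neg_le_rpow {y δ : ℝ} (hy : 0 ≤ y) (hδ0 : 0 ≤ δ) (hδ1 : δ ≤ 1) :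
    1 - exp (-y) ≤ y ^ δ := by
  rcases le_total 1 y with hy1 | hy1
  · linarith [one_le_rpow hy1 hδ0, exp_pos (-y)]
  · calc 1 - exp (-y) ≤ y := by linarith [one_sub_le_exp_neg y]
      _ ≤ y ^ δ := self_le_rpow_of_le_one hy hy1 hδ1

lemma rpow_mul_exp_neg_le_one {x p : ℝ} (hx : 0 ≤ x) (hp0 : 0 ≤ p) (hp1 : p ≤ 1) :
    x ^ p * exp (-x) ≤ 1 := by
  rw [exp_neg, ← div_eq_mul_inv, div_le_one (exp_pos x)]
  calc x ^ p ≤ exp x ^ p := by gcongr; linarith [add_one_le_exp x]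
    _ ≤ exp x := rpow_le_self_of_one_le (one_le_exp hx) hp1

lemma exp_neg_mul_sub_exp_neg_mul (r a b : ℝ) :
    exp (-r * a) - exp (-r * b) = exp (-r * a) * (1 - exp (-(r * (b - a)))) := by
  rw [mul_sub, mul_one, ← exp_add]
  ring_nf

variable {r δ a b : ℝ}

lemma rpow_neg_mul_exp_sub_exp_le_sub_rpow (hr : 0 < r) (hδ0 : 0 ≤ δ) (hδ1 : δ ≤ 1)
    (ha : 0 ≤ a) (hab : a ≤ b) :
    r ^ (-δ) * (exp (-r * a) - exp (-r * b)) ≤ (b - a) ^ δ := by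
  have hba : 0 ≤ b - a := sub_nonneg.2 hab
  have h_exp : exp (-r * a) ≤ 1 := exp_le_one_iff.2 (by nlinarith)
  have h_diff : exp (-r * a) - exp (-r * b) ≤ (r * (b - a)) ^ δ := by
    rw [exp_neg_mul_sub_exp_neg_mul]
    calc exp (-r * a) * (1 - exp (-(r * (b - a))))
        ≤ 1 * (r * (b - a)) ^ δ := by
          gcongr
          · exact sub_nonneg.2 (exp_le_one_iff.2 (by nlinarith))
          · exact one_sub_exp_neg_le_rpow (by positivity) hδ0 hδ1
      _ = (r * (b - a)) ^ δ := one_mul _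
  calc r ^ (-δ) * (exp (-r * a) - exp (-r * b))
      ≤ r ^ (-δ) * (r * (b - a)) ^ δ := by gcongr
    _ = (b - a) ^ δ := by
      rw [mul_rpow hr.le hba, ← mul_assoc, ← rpow_add hr, neg_add_cancel, rpow_zero, one_mul]

lemma rpow_neg_mul_exp_sub_exp_le_rpow_mul_sub (hr : 0 < r) (hδ0 : 0 ≤ δ) (hδ1 : δ ≤ 1)
    (ha : 0 < a) (hab : a ≤ b) :
    r ^ (-δ) * (exp (-r * a) - exp (-r * b)) ≤ a ^ (δ - 1) * (b - a) := by
  have h_diff : exp (-r * a) - exp (-r * b) ≤ exp (-(r * a)) * (r * (b - a)) := by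
    rw [exp_neg_mul_sub_exp_neg_mul, neg_mul]
    gcongr
    linarith [one_sub_le_exp_neg (r * (b - a))]
  have h_scale : r ^ (-δ) * r = (r * a) ^ (1 - δ) * a ^ (δ - 1) := by
    rw [mul_rpow hr.le ha.le, mul_assoc, ← rpow_add ha, sub_add_sub_cancel', sub_self, rpow_zero,
      mul_one, ← rpow_add_one hr.ne', neg_add_eq_sub]
  calc r ^ (-δ) * (exp (-r * a) - exp (-r * b))
      ≤ r ^ (-δ) * (exp (-(r * a)) * (r * (b - a))) := by gcongr
    _ = r ^ (-δ) * r * exp (-(r * a)) * (b - a) := by ring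
    _ = (r * a) ^ (1 - δ) * exp (-(r * a)) * (a ^ (δ - 1) * (b - a)) := by rw [h_scale]; ring
    _ ≤ 1 * (a ^ (δ - 1) * (b - a)) :=
      mul_le_mul_of_nonneg_right
        (rpow_mul_exp_neg_le_one (by positivity) (by linarith) (by linarith))
        (mul_nonneg (rpow_nonneg ha.le _) (sub_nonneg.2 hab))
    _ = a ^ (δ - 1) * (b - a) := one_mul _

end Exponential

/-- The operator norm of `(-A)^{-δ} (e^{aA} - e^{bA})`, for `0 ≤ a ≤ b` and the diagonal operator
`A` with eigenvalues `-μ i < 0`, written as a supremum over the eigenvalues. As a supremum of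
reals, it takes the junk value `0` when the family is unbounded. -/
noncomputable def semigroupDiffNorm {ι : Type*} (μ : ι → ℝ) (δ a b : ℝ) : ℝ :=
  ⨆ i, μ i ^ (-δ) * (exp (-μ i * a) - exp (-μ i * b))

section SemigroupDiffNorm

variable {ι : Type*} {μ : ι → ℝ} {δ a b t : ℝ}

lemma semigroupDiffNorm_nonneg (hμ : ∀ i, 0 < μ i) (hab : a ≤ b) :
    0 ≤ semigroupDiffNorm μ δ a b :=
  Real.iSup_nonneg fun i => mul_nonneg (rpow_nonneg (hμ i).le _) <|
    sub_nonneg.2 <| exp_le_exp.2 <| mul_le_mul_of_nonpos_left hab (neg_nonpos.2 (hμ i).le)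

lemma semigroupDiffNorm_le_sub_rpow (hμ : ∀ i, 0 < μ i) (hδ0 : 0 ≤ δ) (hδ1 : δ ≤ 1)
    (ha : 0 ≤ a) (hab : a ≤ b) : semigroupDiffNorm μ δ a b ≤ (b - a) ^ δ :=
  Real.iSup_le (fun i => rpow_neg_mul_exp_sub_exp_le_sub_rpow (hμ i) hδ0 hδ1 ha hab)
    (rpow_nonneg (sub_nonneg.2 hab) _)

lemma semigroupDiffNorm_le_rpow_mul_sub (hμ : ∀ i, 0 < μ i) (hδ0 : 0 ≤ δ) (hδ1 : δ ≤ 1)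
    (ha : 0 < a) (hab : a ≤ b) : semigroupDiffNorm μ δ a b ≤ a ^ (δ - 1) * (b - a) :=
  Real.iSup_le (fun i => rpow_neg_mul_exp_sub_exp_le_rpow_mul_sub (hμ i) hδ0 hδ1 ha hab)
    (mul_nonneg (rpow_nonneg ha.le _) (sub_nonneg.2 hab))

lemma integral_sq_semigroupDiffNorm_le {C : ℝ} (hμ : ∀ i, 0 < μ i) (htb : t ≤ b)
    (hC : ∀ a ∈ Icc t b, semigroupDiffNorm μ δ a b ≤ C) :
    ∫ a in t..b, semigroupDiffNorm μ δ a b ^ 2 ≤ C ^ 2 * (b - t) := by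
  rw [← abs_of_nonneg (sub_nonneg.2 htb)]
  refine (le_norm_self _).trans (intervalIntegral.norm_integral_le_of_norm_le_const fun a ha => ?_)
  rw [uIoc_of_le htb] at ha
  rw [norm_of_nonneg (sq_nonneg _)]
  exact pow_le_pow_left₀ (semigroupDiffNorm_nonneg hμ ha.2) (hC a (Ioc_subset_Icc_self ha)) 2

lemma integral_sq_semigroupDiffNorm_le_sub_rpow (hμ : ∀ i, 0 < μ i) (hδ0 : 0 ≤ δ) (hδ1 : δ ≤ 1)
    (ht : 0 ≤ t) (htb : t ≤ b) :
    ∫ a in t..b, semigroupDiffNorm μ δ a b ^ 2 ≤ (b - t) ^ (1 + 2 * δ) := by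
  have hbt : 0 ≤ b - t := sub_nonneg.2 htb
  calc ∫ a in t..b, semigroupDiffNorm μ δ a b ^ 2
      ≤ ((b - t) ^ δ) ^ 2 * (b - t) := by
        refine integral_sq_semigroupDiffNorm_le hμ htb fun a ha => ?_
        refine (semigroupDiffNorm_le_sub_rpow hμ hδ0 hδ1 (ht.trans ha.1) ha.2).trans ?_
        exact rpow_le_rpow (sub_nonneg.2 ha.2) (sub_le_sub_left ha.1 b) hδ0
    _ = (b - t) ^ (1 + 2 * δ) := by
      rw [rpow_add_of_nonneg hbt zero_le_one (by positivity), rpow_one, mul_comm 2 δ,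
        rpow_mul hbt, rpow_two, mul_comm]

lemma integral_sq_semigroupDiffNorm_le_rpow_mul_cube (hμ : ∀ i, 0 < μ i) (hδ0 : 0 ≤ δ)
    (hδ1 : δ ≤ 1) (ht : 0 < t) (htb : t ≤ b) :
    ∫ a in t..b, semigroupDiffNorm μ δ a b ^ 2 ≤ t ^ (2 * δ - 2) * (b - t) ^ 3 := by
  calc ∫ a in t..b, semigroupDiffNorm μ δ a b ^ 2
      ≤ (t ^ (δ - 1) * (b - t)) ^ 2 * (b - t) := by
        refine integral_sq_semigroupDiffNorm_le hμ htb fun a ha => ?_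
        refine (semigroupDiffNorm_le_rpow_mul_sub hμ hδ0 hδ1 (ht.trans_le ha.1) ha.2).trans ?_
        exact mul_le_mul (rpow_le_rpow_of_nonpos ht ha.1 (sub_nonpos.2 hδ1))
          (sub_le_sub_left ha.1 b) (sub_nonneg.2 ha.2) (rpow_nonneg ht.le _)
    _ = t ^ (2 * δ - 2) * (b - t) ^ 3 := by
      rw [show 2 * δ - 2 = (δ - 1) * 2 by ring, rpow_mul ht.le, rpow_two]
      ring

lemma integral_sq_semigroupDiffNorm_grid_step_le {h x : ℝ} (hμ : ∀ i, 0 < μ i) (hδ0 : 0 ≤ δ)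
    (hδ1 : δ ≤ 1) (hh : 0 < h) (hx : 0 < x) :
    ∫ a in (x * h)..((x + 1) * h), semigroupDiffNorm μ δ a ((x + 1) * h) ^ 2
      ≤ x ^ (2 * δ - 2) * h ^ (1 + 2 * δ) := by
  have h_len : (x + 1) * h - x * h = h := by ring
  calc ∫ a in (x * h)..((x + 1) * h), semigroupDiffNorm μ δ a ((x + 1) * h) ^ 2
      ≤ (x * h) ^ (2 * δ - 2) * ((x + 1) * h - x * h) ^ 3 :=
        integral_sq_semigroupDiffNorm_le_rpow_mul_cube hμ hδ0 hδ1 (mul_pos hx hh)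
          (by linarith [h_len])
    _ = x ^ (2 * δ - 2) * h ^ (2 * δ - 2 + (3 : ℕ)) := by
      rw [h_len, mul_rpow hx.le hh.le, mul_assoc, ← rpow_add_natCast hh.ne']
    _ = x ^ (2 * δ - 2) * h ^ (1 + 2 * δ) := by
      push_cast
      ring_nf

end SemigroupDiffNorm

lemma sum_range_add_one_rpow_neg_le {p : ℝ} (hp : 1 < p) (n : ℕ) :
    ∑ k ∈ Finset.range n, ((k : ℝ) + 1) ^ (-p) ≤ 1 + 1 / (p - 1) := by
  have hp1 : 0 < p - 1 := sub_pos.2 hp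
  rcases n with _ | n
  · simp only [Finset.range_zero, Finset.sum_empty]
    exact add_nonneg zero_le_one (one_div_nonneg.2 hp1.le)
  have h_anti : AntitoneOn (fun x : ℝ => x ^ (-p)) (Icc 1 (1 + n)) := fun x hx y _ hxy =>
    rpow_le_rpow_of_nonpos (by linarith [hx.1]) hxy (by linarith)
  have h_zero : (0 : ℝ) ∉ uIcc 1 (1 + (n : ℝ)) := by
    rw [uIcc_of_le (by simp)]
    exact fun h => by linarith [h.1]
  have h_tail : ∑ k ∈ Finset.range n, (((k + 1 : ℕ) : ℝ) + 1) ^ (-p) ≤ 1 / (p - 1) :=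
    calc ∑ k ∈ Finset.range n, (((k + 1 : ℕ) : ℝ) + 1) ^ (-p)
        ≤ ∫ x in (1 : ℝ)..1 + n, x ^ (-p) := by
          simpa only [add_comm] using h_anti.sum_le_integral
      _ = (1 - (1 + (n : ℝ)) ^ (-p + 1)) / (p - 1) := by
          rw [integral_rpow (Or.inr ⟨by linarith, h_zero⟩), one_rpow, ← neg_div_neg_eq]
          ring_nf
      _ ≤ 1 / (p - 1) := by
          exact div_le_div_of_nonneg_right (sub_le_self _ (by positivity)) hp1.le
  rw [Finset.sum_range_succ', Nat.cast_zero, zero_add, one_rpow]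
  linarith

lemma sum_integral_grid_reflect {E : Type*} [NormedAddCommGroup E] [NormedSpace ℝ E]
    (f : ℝ → ℝ → E) (h : ℝ) (m : ℕ) :
    ∑ l ∈ Finset.range m, ∫ s in (l * h)..((l + 1) * h), f (m * h - s) ((m - l) * h) =
      ∑ k ∈ Finset.range m, ∫ a in (k * h)..((k + 1) * h), f a ((k + 1) * h) := by
  rw [← Finset.sum_range_reflect]
  refine Finset.sum_congr rfl fun k hk => ?_
  obtain ⟨l, rfl⟩ := Nat.exists_eq_add_of_lt (Finset.mem_range.1 hk)
  rw [show k + l + 1 - 1 - k = l by omega,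
    intervalIntegral.integral_comp_sub_left (fun a => f a _)]
  push_cast
  ring_nf

theorem stmt_18_general {ι : Type*} {μ : ι → ℝ} (hμ : ∀ i, 0 < μ i) {h δ : ℝ} (hh : 0 < h)
    (hδ0 : 0 ≤ δ) (hδ1 : δ < 1 / 2) (m : ℕ) :
    ∑ l ∈ Finset.range m, ∫ s in (l * h)..((l + 1) * h),
        semigroupDiffNorm μ δ (m * h - s) ((m - l) * h) ^ 2
      ≤ (2 + 1 / (1 - 2 * δ)) * h ^ (1 + 2 * δ) := by
  have h_sum (n : ℕ) :
      ∑ k ∈ Finset.range n, ((k : ℝ) + 1) ^ (2 * δ - 2) ≤ 1 + 1 / (1 - 2 * δ) := by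
    convert sum_range_add_one_rpow_neg_le (p := 2 - 2 * δ) (by linarith) n using 3 <;> ring
  rw [sum_integral_grid_reflect (fun a b => semigroupDiffNorm μ δ a b ^ 2)]
  rcases m with _ | n
  · have : 0 < 1 - 2 * δ := by linarith
    simp only [Finset.range_zero, Finset.sum_empty]
    positivity
  rw [Finset.sum_range_succ']
  calc _ ≤ ∑ k ∈ Finset.range n, ((k : ℝ) + 1) ^ (2 * δ - 2) * h ^ (1 + 2 * δ)
            + h ^ (1 + 2 * δ) := by
        refine add_le_add (Finset.sum_le_sum fun k _ => ?_) ?_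
        · simpa only [Nat.cast_succ] using
            integral_sq_semigroupDiffNorm_grid_step_le hμ hδ0 (by linarith) hh k.cast_add_one_pos
        · simpa using integral_sq_semigroupDiffNorm_le_sub_rpow hμ hδ0 (by linarith) le_rfl hh.le
    _ ≤ (1 + 1 / (1 - 2 * δ)) * h ^ (1 + 2 * δ) + h ^ (1 + 2 * δ) := by
        rw [← Finset.sum_mul]
        gcongr
        exact h_sum n
    _ = (2 + 1 / (1 - 2 * δ)) * h ^ (1 + 2 * δ) := by ring

/-- Deterministic core of the temporal discretization error bound for the diffusion term:
for `T > 0`, `M ≥ 1`, `h = T/M`, `m ∈ {1,…,M}` and `δ ∈ (0,1/2)` one has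
`∑_{l=0}^{m-1} ∫_{lh}^{(l+1)h} (sup_{λ>0} λ^{-δ}(e^{-λ(mh-s)} - e^{-λ(m-l)h}))² ds
  ≤ (2 + 1/(1-2δ)) h^{1+2δ}`. -/
theorem stmt_18 (T : ℝ) (hT : 0 < T) (M : ℕ) (hM : 1 ≤ M) (m : ℕ)
    (hm1 : 1 ≤ m) (hm2 : m ≤ M) (δ : ℝ) (hδ0 : 0 < δ) (hδ1 : δ < 1 / 2) :
    ∑ l ∈ Finset.range m,
        ∫ s in ((l : ℝ) * (T / M))..(((l : ℝ) + 1) * (T / M)),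
          (⨆ lam : Set.Ioi (0 : ℝ),
            (lam : ℝ) ^ (-δ) *
              (Real.exp (-(lam : ℝ) * ((m : ℝ) * (T / M) - s))
                - Real.exp (-(lam : ℝ) * (((m : ℝ) - (l : ℝ)) * (T / M))))) ^ 2
      ≤ (2 + 1 / (1 - 2 * δ)) * (T / M) ^ (1 + 2 * δ) :=
  stmt_18_general (fun lam : Ioi (0 : ℝ) => lam.2) (div_pos hT (Nat.cast_pos.2 hM)) hδ0.le hδ1 m
end

section
/- Let T > 0, M ∈ ℕ with M ≥ 2, h = T/M and m ∈ {2, …, M}. Then ∑_{l=0}^{m-2} ∫_{lh}^{(l+1)h} ( sup_{λ>0} ( e^{-λ(mh - s)} - e^{-λ(m-l)h} ) ) ds ≤ (h/2)·(1 + ln(M)). -/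
/-!
Since `a` lies between `0` and `b`, convexity of `exp` bounds `e^{-λa}` by the chord
`(1 - a/b) + (a/b) e^{-λb}`, hence `e^{-λa} - e^{-λb} ≤ (b - a)/b` uniformly in `λ`.
With `a = mh - s` and `b = (m - l)h` this denominator is constant in `s`, so the `l`-th integral
is at most `h / (2(m - l))`, and these bounds add up to `(h/2)(H_m - 1) ≤ (h/2) ln m`. Bounding
instead by `(b - a)/a` would cost the extra summand `1`.
-/

open Set

/-- For `0 ≤ a ≤ b`, the best bound on the operator norm `‖e^{aA} - e^{bA}‖` that is uniform over
all diagonal negative definite operators `A`: the supremum runs over every possible eigenvalue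
`-λ`. The real supremum has the junk value `0` if the differences are unbounded above, which
does not happen for `0 ≤ a`. -/
noncomputable def semigroupGap (a b : ℝ) : ℝ :=
  ⨆ lam : Ioi (0 : ℝ), (Real.exp (-(lam : ℝ) * a) - Real.exp (-(lam : ℝ) * b))

theorem exp_neg_mul_sub_exp_neg_mul_le {a b : ℝ} (ha : 0 ≤ a) (hab : a ≤ b) (hb : 0 < b)
    (x : ℝ) : Real.exp (-x * a) - Real.exp (-x * b) ≤ (b - a) / b := by
  have hratio : a / b ≤ 1 := (div_le_one hb).2 hab
  have hchord : Real.exp (-x * a) ≤ (1 - a / b) + a / b * Real.exp (-x * b) := by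
    have hpoint : a / b * (-x * b) = -x * a := by field_simp
    simpa only [smul_eq_mul, mul_zero, zero_add, hpoint, Real.exp_zero, mul_one] using
      convexOn_exp.2 (mem_univ 0) (mem_univ (-x * b)) (sub_nonneg.2 hratio) (div_nonneg ha hb.le)
        (sub_add_cancel 1 (a / b))
  calc Real.exp (-x * a) - Real.exp (-x * b)
      ≤ (1 - a / b) * (1 - Real.exp (-x * b)) := by linarith
    _ ≤ 1 - a / b :=
        mul_le_of_le_one_right (sub_nonneg.2 hratio) (sub_le_self _ (Real.exp_pos _).le)
    _ = (b - a) / b := by field_simp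

theorem semigroupGap_le {a b : ℝ} (ha : 0 ≤ a) (hab : a ≤ b) (hb : 0 < b) :
    semigroupGap a b ≤ (b - a) / b :=
  have : Nonempty (Ioi (0 : ℝ)) := nonempty_Ioi_subtype
  ciSup_le fun lam => exp_neg_mul_sub_exp_neg_mul_le ha hab hb lam

theorem bddAbove_range_exp_neg_mul_sub_exp_neg_mul {a : ℝ} (ha : 0 ≤ a) (b : ℝ) :
    BddAbove (range fun lam : Ioi (0 : ℝ) =>
      Real.exp (-(lam : ℝ) * a) - Real.exp (-(lam : ℝ) * b)) := by
  refine ⟨1, forall_mem_range.2 fun ⟨x, (hx : 0 < x)⟩ => ?_⟩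
  have hexp : Real.exp (-x * a) ≤ 1 := Real.exp_le_one_iff.2 (by nlinarith)
  linarith [Real.exp_pos (-x * b)]

theorem antitoneOn_semigroupGap_left (b : ℝ) :
    AntitoneOn (fun a => semigroupGap a b) (Ici 0) := by
  intro a ha a' _ haa'
  refine ciSup_mono (bddAbove_range_exp_neg_mul_sub_exp_neg_mul ha b) fun ⟨x, (hx : 0 < x)⟩ => ?_
  gcongr ?_ - _
  exact Real.exp_le_exp.2 (by nlinarith)

theorem intervalIntegrable_semigroupGap_sub {a b c : ℝ} (hac : a ≤ c) (hbc : b ≤ c) (d : ℝ) :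
    IntervalIntegrable (fun s => semigroupGap (c - s) d) MeasureTheory.volume a b := by
  refine MonotoneOn.intervalIntegrable fun s hs t ht hst => ?_
  have hle {r : ℝ} (hr : r ∈ uIcc a b) : 0 ≤ c - r :=
    sub_nonneg.2 (hr.2.trans (max_le hac hbc))
  exact antitoneOn_semigroupGap_left d (hle ht) (hle hs) (by linarith)

theorem integral_semigroupGap_sub_le {a b c : ℝ} (hab : a ≤ b) (hbc : b ≤ c) (hac : a < c) :
    ∫ s in a..b, semigroupGap (c - s) (c - a) ≤ (b - a) ^ 2 / (2 * (c - a)) := by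
  have hpos : 0 < c - a := sub_pos.2 hac
  calc ∫ s in a..b, semigroupGap (c - s) (c - a)
      ≤ ∫ s in a..b, (s - a) / (c - a) := by
        refine intervalIntegral.integral_mono_on hab
          (intervalIntegrable_semigroupGap_sub hac.le hbc _)
          (Continuous.intervalIntegrable (by fun_prop) _ _) fun s hs => ?_
        simpa only [sub_sub_sub_cancel_left] using
          semigroupGap_le (sub_nonneg.2 (hs.2.trans hbc)) (sub_le_sub_left hs.1 c) hpos
    _ = (b - a) ^ 2 / (2 * (c - a)) := by
        rw [intervalIntegral.integral_div, intervalIntegral.integral_comp_sub_right (fun s => s),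
          integral_id]
        field_simp
        ring

theorem sum_range_inv_sub_le_log {m : ℕ} (hm : 1 ≤ m) :
    ∑ l ∈ Finset.range (m - 1), ((m : ℝ) - l)⁻¹ ≤ Real.log m := by
  obtain ⟨n, rfl⟩ := Nat.exists_eq_add_of_le' hm
  have hreflect : ∑ l ∈ Finset.range n, (((n + 1 : ℕ) : ℝ) - l)⁻¹
      = ∑ i ∈ Finset.range n, ((i : ℝ) + 1 + 1)⁻¹ := by
    rw [← Finset.sum_range_reflect]
    refine Finset.sum_congr rfl fun i hi => ?_
    have hi : i + 1 ≤ n := Finset.mem_range.1 hi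
    rw [Nat.sub_sub, add_comm 1 i, Nat.cast_sub hi]
    push_cast
    ring
  have hharmonic : (harmonic (n + 1) : ℝ) = ∑ i ∈ Finset.range n, ((i : ℝ) + 1 + 1)⁻¹ + 1 := by
    simp [harmonic, Finset.sum_range_succ']
  rw [Nat.add_sub_cancel, hreflect]
  linarith [harmonic_le_one_add_log (n + 1)]

theorem stmt_19_general {h : ℝ} (hh : 0 < h) {m : ℕ} (hm : 1 ≤ m) :
    ∑ l ∈ Finset.range (m - 1), ∫ s in (l * h)..((l + 1) * h),
        semigroupGap (m * h - s) ((m - l) * h)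
      ≤ h / 2 * Real.log m := by
  calc _ ≤ ∑ l ∈ Finset.range (m - 1), h / 2 * ((m : ℝ) - l)⁻¹ := by
        refine Finset.sum_le_sum fun l hl => ?_
        have hlm : (l : ℝ) + 1 ≤ m := by
          exact_mod_cast (Finset.mem_range.1 hl).trans_le (Nat.sub_le m 1)
        have hgap : 0 < (m : ℝ) - l := by linarith
        have hstep : ((l : ℝ) + 1) * h - l * h = h := by ring
        have hbound := integral_semigroupGap_sub_le (a := l * h) (b := (l + 1) * h) (c := m * h)
          (by linarith) (by gcongr) (mul_lt_mul_of_pos_right (sub_pos.1 hgap) hh)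
        rw [hstep, ← sub_mul] at hbound
        exact hbound.trans_eq (by field_simp)
    _ = h / 2 * ∑ l ∈ Finset.range (m - 1), ((m : ℝ) - l)⁻¹ := (Finset.mul_sum ..).symm
    _ ≤ h / 2 * Real.log m := by
        gcongr
        exact sum_range_inv_sub_le_log hm

/-- Deterministic core of the drift temporal discretization error estimate:
for `T > 0`, `M ≥ 2`, `h = T/M` and `m ∈ {2,…,M}` one has
`∑_{l=0}^{m-2} ∫_{lh}^{(l+1)h} (sup_{λ>0} (e^{-λ(mh-s)} - e^{-λ(m-l)h})) ds
  ≤ (h/2)(1 + ln M)`. -/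
theorem stmt_19 (T : ℝ) (hT : 0 < T) (M : ℕ) (hM : 2 ≤ M) (m : ℕ)
    (hm1 : 2 ≤ m) (hm2 : m ≤ M) :
    ∑ l ∈ Finset.range (m - 1),
        ∫ s in ((l : ℝ) * (T / M))..(((l : ℝ) + 1) * (T / M)),
          (⨆ lam : Set.Ioi (0 : ℝ),
            (Real.exp (-(lam : ℝ) * ((m : ℝ) * (T / M) - s))
              - Real.exp (-(lam : ℝ) * (((m : ℝ) - (l : ℝ)) * (T / M)))))
      ≤ ((T / M) / 2) * (1 + Real.log M) := by
  have hm : 0 < m := by omega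
  have hh : 0 < T / M := div_pos hT (Nat.cast_pos.2 (hm.trans_le hm2))
  have hlog : Real.log m ≤ 1 + Real.log M :=
    (Real.log_le_log (by positivity) (Nat.cast_le.2 hm2)).trans (by linarith)
  exact (stmt_19_general hh hm).trans (by gcongr)
end
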